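/- arXiv:2101.08921 — 3 statements merged into one kernel-verified Lean document; each statement's English description precedes it below -/
import Mathlib

section
/- Let (u,v) be a smooth localized solution of KP-I (κ = −1) on [0,∞) which is periodic in time: there is T > 0 with u(x,y,t+T) = u(x,y,t) for all (x,y) ∈ ℝ² and t ≥ 0. Assume u is compact as t → ∞ with algebraically bounded trajectory: there are constants C₀ > 0 and 0 ≤ m₁, m₂ < 1 and functions x(·), y(·) : [0,∞) → ℝ with |x(t)| ≤ C₀ t^{m₁} and |y(t)| ≤ C₀ t^{m₂} for all t ≥ 0, such that for every ε > 0 there exists R > 0 with sup_{t≥0} ∫_{{(x,y) : (x−x(t))² + (y−y(t))² ≥ R²}} u²(x,y,t) dxdy < ε. Then u ≡ 0. -/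
/-!
The idea is the formal identity `d/dt ∫ x u = ½ ∫ u²`: for a solution periodic in time the
left-hand side averages to zero over a period, so `∫₀ᵀ ∫ u² = 0`. Since the Schwartz bounds on
the slices are not uniform in time, the identity is derived with compactly supported weights.

The equation is multiplied by `F'(x) G(y)` and integrated over a box and one period, where `F`
and `G` vanish to sufficient order on the boundary (`box_identity`). The term
`∂ᵧv F' G` is integrated by parts through `∂ₓv = ∂ᵧu`, which removes `v`. What remains is
`∫ u² F'' G = 2 ∫ u (F G'' - F'''' G)`. With `F(x) = s⁴ f(x/s²)`, `G(y) = g(y/s⁴)`, `f''(0) = 1`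
and `g(0) = 1`, the weight on the right is `O(s⁻⁴)` on a box of volume `O(s⁶)`; by the
arithmetic-geometric mean inequality the right-hand side is `O(1/s)` (`weighted_mass_le`), while
the left-hand side tends to `∫₀ᵀ ∫ u²` (`weighted_mass_tendsto`).

The only uniform information used is a bound on `∫ u²` over one period (`mass_bounded`), which
comes from tightness around a trajectory that is bounded on `[0, T]`.
-/


open MeasureTheory Filter Real

noncomputable section

/-- Partial derivative in the first (x) variable. -/
def pdx (u : ℝ → ℝ → ℝ → ℝ) : ℝ → ℝ → ℝ → ℝ := fun x y t => deriv (fun x' => u x' y t) x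

/-- Partial derivative in the second (y) variable. -/
def pdy (u : ℝ → ℝ → ℝ → ℝ) : ℝ → ℝ → ℝ → ℝ := fun x y t => deriv (fun y' => u x y' t) y

/-- Partial derivative in the time variable. -/
def pdt (u : ℝ → ℝ → ℝ → ℝ) : ℝ → ℝ → ℝ → ℝ := fun x y t => deriv (fun t' => u x y t') t

/-- A two-variable real function is (the restriction of) a Schwartz function on `ℝ²`. -/
def IsSchwartzSlice (f : ℝ → ℝ → ℝ) : Prop :=
  ∃ g : SchwartzMap (ℝ × ℝ) ℝ, ∀ x y, g (x, y) = f x y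

/-- A smooth localized solution `(u,v)` of the KP equation
`∂ₜ u + ∂ₓ³ u + κ ∂ᵧ v + u ∂ₓ u = 0`, `∂ₓ v = ∂ᵧ u`, on `[T₀,∞)`. -/
structure KPSol (κ T₀ : ℝ) (u v : ℝ → ℝ → ℝ → ℝ) : Prop where
  smooth_u : ContDiff ℝ (⊤ : ℕ∞) (fun p : ℝ × ℝ × ℝ => u p.1 p.2.1 p.2.2)
  smooth_v : ContDiff ℝ (⊤ : ℕ∞) (fun p : ℝ × ℝ × ℝ => v p.1 p.2.1 p.2.2)
  schwartz_u : ∀ t, T₀ ≤ t → IsSchwartzSlice fun x y => u x y t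
  schwartz_v : ∀ t, T₀ ≤ t → IsSchwartzSlice fun x y => v x y t
  compat : ∀ x y t, T₀ ≤ t → pdx v x y t = pdy u x y t
  kp : ∀ x y t, T₀ ≤ t →
    pdt u x y t + pdx (pdx (pdx u)) x y t + κ * pdy v x y t + u x y t * pdx u x y t = 0

/-- `E¹`-boundedness: `sup_{t ≥ T₀} ∫ (u² + (∂ₓu)² + v²) < ∞`. -/
def E1Bounded (T₀ : ℝ) (u v : ℝ → ℝ → ℝ → ℝ) : Prop :=
  ∃ C : ℝ, ∀ t, T₀ ≤ t →
    (∫ p : ℝ × ℝ, ((u p.1 p.2 t) ^ 2 + (pdx u p.1 p.2 t) ^ 2 + (v p.1 p.2 t) ^ 2)) ≤ C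

/-- `E²`-boundedness: `E¹`-bounded, plus a smooth Schwartz-in-space `w` with `∂ₓ w = ∂ᵧ v`
and `sup_{t ≥ T₀} ∫ ((∂ᵧu)² + (∂ₓ²u)² + w²) < ∞`. -/
def E2Bounded (T₀ : ℝ) (u v w : ℝ → ℝ → ℝ → ℝ) : Prop :=
  E1Bounded T₀ u v ∧
  ContDiff ℝ (⊤ : ℕ∞) (fun p : ℝ × ℝ × ℝ => w p.1 p.2.1 p.2.2) ∧
  (∀ t, T₀ ≤ t → IsSchwartzSlice fun x y => w x y t) ∧
  (∀ x y t, T₀ ≤ t → pdx w x y t = pdy v x y t) ∧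
  ∃ C : ℝ, ∀ t, T₀ ≤ t →
    (∫ p : ℝ × ℝ,
      ((pdy u p.1 p.2 t) ^ 2 + (pdx (pdx u) p.1 p.2 t) ^ 2 + (w p.1 p.2 t) ^ 2)) ≤ C

/-- The fixed weight function `φ`: smooth, positive, even, nonincreasing on `[0,∞)`,
equal to `1` on `[0,1]`, equal to `e^{-x}` for `x ≥ 2`, comparable to `e^{-x}` on `[0,∞)`,
with `|φ'| ≤ cφ` and `|φ''| ≤ cφ`. -/
structure KPWeight (φ : ℝ → ℝ) : Prop where
  smooth : ContDiff ℝ (⊤ : ℕ∞) φ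
  pos : ∀ x, 0 < φ x
  even : ∀ x, φ (-x) = φ x
  deriv_nonpos : ∀ x, 0 ≤ x → deriv φ x ≤ 0
  eq_one : ∀ x, 0 ≤ x → x ≤ 1 → φ x = 1
  eq_exp : ∀ x, 2 ≤ x → φ x = Real.exp (-x)
  lower : ∀ x, 0 ≤ x → Real.exp (-x) ≤ φ x
  upper : ∀ x, 0 ≤ x → φ x ≤ 3 * Real.exp (-x)
  deriv_bound : ∃ c > 0, (∀ x, |deriv φ x| ≤ c * φ x) ∧ (∀ x, |deriv (deriv φ) x| ≤ c * φ x)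

/-! ### Smoothness of partial derivatives -/

lemma pdx_smooth {u : ℝ → ℝ → ℝ → ℝ}
    (hu : ContDiff ℝ (⊤ : ℕ∞) (fun p : ℝ × ℝ × ℝ => u p.1 p.2.1 p.2.2)) :
    ContDiff ℝ (⊤ : ℕ∞) (fun p : ℝ × ℝ × ℝ => pdx u p.1 p.2.1 p.2.2) ∧
    ∀ x y t, HasDerivAt (fun x' => u x' y t) (pdx u x y t) x := by
  have hd : ∀ x y t, HasDerivAt (fun x' => u x' y t)
      (fderiv ℝ (fun p : ℝ × ℝ × ℝ => u p.1 p.2.1 p.2.2) (x, y, t) (1, 0, 0)) x := by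
    intro x y t
    have h1 := ((hu.differentiable (by simp)) (x, y, t)).hasFDerivAt
    have h2 : HasDerivAt (fun x' : ℝ => (x', y, t)) ((1 : ℝ), (0 : ℝ), (0 : ℝ)) x :=
      (hasDerivAt_id x).prodMk ((hasDerivAt_const x y).prodMk (hasDerivAt_const x t))
    exact h1.comp_hasDerivAt x h2
  have he : (fun p : ℝ × ℝ × ℝ => pdx u p.1 p.2.1 p.2.2) = fun p =>
      fderiv ℝ (fun p : ℝ × ℝ × ℝ => u p.1 p.2.1 p.2.2) p (1, 0, 0) := by
    ext p; exact (hd _ _ _).deriv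
  refine ⟨?_, fun x y t => ?_⟩
  · rw [he]
    exact (hu.fderiv_right (m := (⊤ : ℕ∞)) (by simp)).clm_apply contDiff_const
  · rw [pdx, (hd x y t).deriv]; exact hd x y t

lemma pdy_smooth {u : ℝ → ℝ → ℝ → ℝ}
    (hu : ContDiff ℝ (⊤ : ℕ∞) (fun p : ℝ × ℝ × ℝ => u p.1 p.2.1 p.2.2)) :
    ContDiff ℝ (⊤ : ℕ∞) (fun p : ℝ × ℝ × ℝ => pdy u p.1 p.2.1 p.2.2) ∧
    ∀ x y t, HasDerivAt (fun y' => u x y' t) (pdy u x y t) y := by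
  have hd : ∀ x y t, HasDerivAt (fun y' => u x y' t)
      (fderiv ℝ (fun p : ℝ × ℝ × ℝ => u p.1 p.2.1 p.2.2) (x, y, t) (0, 1, 0)) y := by
    intro x y t
    have h1 := ((hu.differentiable (by simp)) (x, y, t)).hasFDerivAt
    have h2 : HasDerivAt (fun y' : ℝ => (x, y', t)) ((0 : ℝ), (1 : ℝ), (0 : ℝ)) y :=
      (hasDerivAt_const y x).prodMk ((hasDerivAt_id y).prodMk (hasDerivAt_const y t))
    exact h1.comp_hasDerivAt y h2
  have he : (fun p : ℝ × ℝ × ℝ => pdy u p.1 p.2.1 p.2.2) = fun p =>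
      fderiv ℝ (fun p : ℝ × ℝ × ℝ => u p.1 p.2.1 p.2.2) p (0, 1, 0) := by
    ext p; exact (hd _ _ _).deriv
  refine ⟨?_, fun x y t => ?_⟩
  · rw [he]
    exact (hu.fderiv_right (m := (⊤ : ℕ∞)) (by simp)).clm_apply contDiff_const
  · rw [pdy, (hd x y t).deriv]; exact hd x y t

lemma pdt_smooth {u : ℝ → ℝ → ℝ → ℝ}
    (hu : ContDiff ℝ (⊤ : ℕ∞) (fun p : ℝ × ℝ × ℝ => u p.1 p.2.1 p.2.2)) :
    ContDiff ℝ (⊤ : ℕ∞) (fun p : ℝ × ℝ × ℝ => pdt u p.1 p.2.1 p.2.2) ∧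
    ∀ x y t, HasDerivAt (fun t' => u x y t') (pdt u x y t) t := by
  have hd : ∀ x y t, HasDerivAt (fun t' => u x y t')
      (fderiv ℝ (fun p : ℝ × ℝ × ℝ => u p.1 p.2.1 p.2.2) (x, y, t) (0, 0, 1)) t := by
    intro x y t
    have h1 := ((hu.differentiable (by simp)) (x, y, t)).hasFDerivAt
    have h2 : HasDerivAt (fun t' : ℝ => (x, y, t')) ((0 : ℝ), (0 : ℝ), (1 : ℝ)) t :=
      (hasDerivAt_const t x).prodMk ((hasDerivAt_const t y).prodMk (hasDerivAt_id t))
    exact h1.comp_hasDerivAt t h2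
  have he : (fun p : ℝ × ℝ × ℝ => pdt u p.1 p.2.1 p.2.2) = fun p =>
      fderiv ℝ (fun p : ℝ × ℝ × ℝ => u p.1 p.2.1 p.2.2) p (0, 0, 1) := by
    ext p; exact (hd _ _ _).deriv
  refine ⟨?_, fun x y t => ?_⟩
  · rw [he]
    exact (hu.fderiv_right (m := (⊤ : ℕ∞)) (by simp)).clm_apply contDiff_const
  · rw [pdt, (hd x y t).deriv]; exact hd x y t

/-! ### Integration by parts on space-time boxes -/

/-- Lebesgue measure on the rectangle `(-a, a] × (-b, b]`. -/
def rectM (a b : ℝ) : Measure (ℝ × ℝ) :=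
  (volume.restrict (Set.Ioc (-a) a)).prod (volume.restrict (Set.Ioc (-b) b))

/-- Lebesgue measure on the space-time box `(-a, a] × (-b, b] × (0, T]`; points are
`((x, y), t)`. -/
def boxM (a b T : ℝ) : Measure ((ℝ × ℝ) × ℝ) :=
  (rectM a b).prod (volume.restrict (Set.Ioc 0 T))

/-- Lebesgue measure on the space-time slab `ℝ² × (0, T]`. -/
def slabM (T : ℝ) : Measure ((ℝ × ℝ) × ℝ) :=
  (volume : Measure (ℝ × ℝ)).prod (volume.restrict (Set.Ioc 0 T))

lemma rectM_eq (a b : ℝ) :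
    rectM a b = (volume : Measure (ℝ × ℝ)).restrict
      (Set.Ioc (-a) a ×ˢ Set.Ioc (-b) b) := by
  rw [rectM, Measure.prod_restrict]; rfl

lemma boxM_eq (a b T : ℝ) :
    boxM a b T = (slabM T).restrict ((Set.Ioc (-a) a ×ˢ Set.Ioc (-b) b) ×ˢ Set.univ) := by
  rw [boxM, slabM, rectM_eq]
  conv_lhs => rw [← Measure.restrict_univ (μ := volume.restrict (Set.Ioc 0 T))]
  rw [Measure.prod_restrict]

instance (a b : ℝ) : IsFiniteMeasure (rectM a b) := by unfold rectM; infer_instance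
instance (a b T : ℝ) : IsFiniteMeasure (boxM a b T) := by unfold boxM; infer_instance
instance (T : ℝ) : SFinite (slabM T) := by unfold slabM; infer_instance

lemma rect_integrable (a b : ℝ) {H : ℝ × ℝ → ℝ} (hH : Continuous H) :
    Integrable H (rectM a b) := by
  rw [rectM_eq]
  refine IntegrableOn.mono_set (t := Set.Icc (-a) a ×ˢ Set.Icc (-b) b) ?_
    (Set.prod_mono Set.Ioc_subset_Icc_self Set.Ioc_subset_Icc_self)
  exact hH.continuousOn.integrableOn_compact (isCompact_Icc.prod isCompact_Icc)

lemma box_integrable (a b T : ℝ) {H : (ℝ × ℝ) × ℝ → ℝ} (hH : Continuous H) :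
    Integrable H (boxM a b T) := by
  rw [boxM, rectM_eq, Measure.prod_restrict]
  refine IntegrableOn.mono_set
    (t := (Set.Icc (-a) a ×ˢ Set.Icc (-b) b) ×ˢ Set.Icc 0 T) ?_
    (Set.prod_mono (Set.prod_mono Set.Ioc_subset_Icc_self Set.Ioc_subset_Icc_self)
      Set.Ioc_subset_Icc_self)
  exact hH.continuousOn.integrableOn_compact
    ((isCompact_Icc.prod isCompact_Icc).prod isCompact_Icc)

lemma Ioc_integral_eq_zero {c d : ℝ} (hcd : c ≤ d) {P P' : ℝ → ℝ}
    (hd : ∀ x, HasDerivAt P (P' x) x) (hc : Continuous P') (h : P d = P c) :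
    ∫ x in Set.Ioc c d, P' x = 0 := by
  rw [← intervalIntegral.integral_of_le hcd,
    intervalIntegral.integral_eq_sub_of_hasDerivAt (fun x _ => hd x)
      (hc.intervalIntegrable _ _), h, sub_self]

lemma box_dx {a b T : ℝ} (ha : 0 ≤ a) {P P' : ℝ → ℝ → ℝ → ℝ}
    (hd : ∀ x y t, HasDerivAt (fun x' => P x' y t) (P' x y t) x)
    (hc : Continuous fun p : (ℝ × ℝ) × ℝ => P' p.1.1 p.1.2 p.2)
    (h : ∀ y t, P a y t = P (-a) y t) :
    ∫ p, P' p.1.1 p.1.2 p.2 ∂(boxM a b T) = 0 := by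
  have hi := box_integrable a b T hc
  rw [boxM] at hi ⊢
  rw [integral_prod_symm _ hi]
  refine (integral_congr_ae (ae_of_all _ fun t => ?_)).trans (integral_zero _ _)
  have hct : Continuous fun p : ℝ × ℝ => P' p.1 p.2 t :=
    hc.comp (continuous_id.prodMk continuous_const)
  have hi2 := rect_integrable a b hct
  rw [rectM] at hi2 ⊢
  refine (integral_prod_symm _ hi2).trans
    ((integral_congr_ae (ae_of_all _ fun y => ?_)).trans (integral_zero _ _))
  exact Ioc_integral_eq_zero (by linarith) (fun x => hd x y t)
    (hct.comp (continuous_id.prodMk continuous_const)) (h y t)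

lemma box_dy {a b T : ℝ} (hb : 0 ≤ b) {P P' : ℝ → ℝ → ℝ → ℝ}
    (hd : ∀ x y t, HasDerivAt (fun y' => P x y' t) (P' x y t) y)
    (hc : Continuous fun p : (ℝ × ℝ) × ℝ => P' p.1.1 p.1.2 p.2)
    (h : ∀ x t, P x b t = P x (-b) t) :
    ∫ p, P' p.1.1 p.1.2 p.2 ∂(boxM a b T) = 0 := by
  have hi := box_integrable a b T hc
  rw [boxM] at hi ⊢
  rw [integral_prod_symm _ hi]
  refine (integral_congr_ae (ae_of_all _ fun t => ?_)).trans (integral_zero _ _)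
  have hct : Continuous fun p : ℝ × ℝ => P' p.1 p.2 t :=
    hc.comp (continuous_id.prodMk continuous_const)
  have hi2 := rect_integrable a b hct
  rw [rectM] at hi2 ⊢
  refine (integral_prod _ hi2).trans
    ((integral_congr_ae (ae_of_all _ fun x => ?_)).trans (integral_zero _ _))
  exact Ioc_integral_eq_zero (by linarith) (fun y => hd x y t)
    (hct.comp (continuous_const.prodMk continuous_id)) (h x t)

lemma box_dt {a b T : ℝ} (hT : 0 ≤ T) {P P' : ℝ → ℝ → ℝ → ℝ}
    (hd : ∀ x y t, HasDerivAt (fun t' => P x y t') (P' x y t) t)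
    (hc : Continuous fun p : (ℝ × ℝ) × ℝ => P' p.1.1 p.1.2 p.2)
    (h : ∀ x y, P x y T = P x y 0) :
    ∫ p, P' p.1.1 p.1.2 p.2 ∂(boxM a b T) = 0 := by
  have hi := box_integrable a b T hc
  rw [boxM] at hi ⊢
  rw [integral_prod _ hi]
  refine (integral_congr_ae (ae_of_all _ fun q => ?_)).trans (integral_zero _ _)
  exact Ioc_integral_eq_zero hT (fun t => hd q.1 q.2 t)
    (hc.comp (continuous_const.prodMk continuous_id)) (h q.1 q.2)

lemma cont_reorder {w : ℝ → ℝ → ℝ → ℝ}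
    (hw : ContDiff ℝ (⊤ : ℕ∞) (fun p : ℝ × ℝ × ℝ => w p.1 p.2.1 p.2.2)) :
    Continuous fun p : (ℝ × ℝ) × ℝ => w p.1.1 p.1.2 p.2 :=
  hw.continuous.comp (g := fun p : ℝ × ℝ × ℝ => w p.1 p.2.1 p.2.2)
    (f := fun p : (ℝ × ℝ) × ℝ => (p.1.1, p.1.2, p.2)) (by fun_prop)

/-- The equation tested against `F'(x) G(y)` over one period. All derivatives are moved onto
the weights; the nonlocal term `v` disappears because `F'` has the primitive `F`, also
vanishing at `±a`, so that `v F' G'` becomes `-∂ₓv F G' = -∂ᵧu F G'`, and then `u F G''`. -/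
lemma box_identity {u v : ℝ → ℝ → ℝ → ℝ} (hsol : KPSol (-1) 0 u v) {T a b : ℝ}
    (hT : 0 ≤ T) (ha : 0 ≤ a) (hb : 0 ≤ b) (hper : ∀ x y, u x y T = u x y 0)
    {F F1 F2 F3 F4 G G1 G2 : ℝ → ℝ}
    (hF : ∀ x, HasDerivAt F (F1 x) x) (hF1 : ∀ x, HasDerivAt F1 (F2 x) x)
    (hF2 : ∀ x, HasDerivAt F2 (F3 x) x) (hF3 : ∀ x, HasDerivAt F3 (F4 x) x)
    (hF4 : Continuous F4)
    (hG : ∀ x, HasDerivAt G (G1 x) x) (hG1 : ∀ x, HasDerivAt G1 (G2 x) x)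
    (hG2 : Continuous G2)
    (zF : F a = 0 ∧ F (-a) = 0) (zF1 : F1 a = 0 ∧ F1 (-a) = 0)
    (zF2 : F2 a = 0 ∧ F2 (-a) = 0) (zF3 : F3 a = 0 ∧ F3 (-a) = 0)
    (zG : G b = 0 ∧ G (-b) = 0) (zG1 : G1 b = 0 ∧ G1 (-b) = 0) :
    ∫ p, (u p.1.1 p.1.2 p.2) ^ 2 * (F2 p.1.1 * G p.1.2) ∂(boxM a b T) =
    ∫ p, 2 * (u p.1.1 p.1.2 p.2 * (F p.1.1 * G2 p.1.2 - F4 p.1.1 * G p.1.2))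
      ∂(boxM a b T) := by
  obtain ⟨su1, du1⟩ := pdx_smooth hsol.smooth_u
  obtain ⟨su2, du2⟩ := pdx_smooth su1
  obtain ⟨su3, du3⟩ := pdx_smooth su2
  obtain ⟨suy, duy⟩ := pdy_smooth hsol.smooth_u
  obtain ⟨sut, dut⟩ := pdt_smooth hsol.smooth_u
  obtain ⟨svx, dvx⟩ := pdx_smooth hsol.smooth_v
  obtain ⟨svy, dvy⟩ := pdy_smooth hsol.smooth_v
  have cu := hsol.smooth_u.continuous
  have cv := hsol.smooth_v.continuous
  have cu1 := cont_reorder su1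
  have cu2 := cont_reorder su2
  have cu3 := cont_reorder su3
  have cuy := cont_reorder suy
  have cut := cont_reorder sut
  have cvx := cont_reorder svx
  have cvy := cont_reorder svy
  have cF : Continuous F := continuous_iff_continuousAt.2 fun x => (hF x).continuousAt
  have cF1 : Continuous F1 := continuous_iff_continuousAt.2 fun x => (hF1 x).continuousAt
  have cF2 : Continuous F2 := continuous_iff_continuousAt.2 fun x => (hF2 x).continuousAt
  have cF3 : Continuous F3 := continuous_iff_continuousAt.2 fun x => (hF3 x).continuousAt
  have cG : Continuous G := continuous_iff_continuousAt.2 fun x => (hG x).continuousAt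
  have cG1 : Continuous G1 := continuous_iff_continuousAt.2 fun x => (hG1 x).continuousAt
  -- `F' G` times the equation is `∂ₓA - ∂ᵧB + ∂ₜC` plus terms without derivatives of `u`
  let A' : ℝ → ℝ → ℝ → ℝ := fun x y t =>
    G y * ((F2 x * pdx (pdx u) x y t + F1 x * pdx (pdx (pdx u)) x y t)
      - (F3 x * pdx u x y t + F2 x * pdx (pdx u) x y t)
      + (F4 x * u x y t + F3 x * pdx u x y t)
      + (F2 x * (u x y t * u x y t)
        + F1 x * (pdx u x y t * u x y t + u x y t * pdx u x y t)) / 2)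
    + G1 y * (F1 x * v x y t + F x * pdx v x y t)
  let B' : ℝ → ℝ → ℝ → ℝ := fun x y t =>
    F1 x * (G1 y * v x y t + G y * pdy v x y t)
    + F x * (G2 y * u x y t + G1 y * pdy u x y t)
  let C' : ℝ → ℝ → ℝ → ℝ := fun x y t => (F1 x * G y) * pdt u x y t
  have hA : Continuous fun p : (ℝ × ℝ) × ℝ => A' p.1.1 p.1.2 p.2 := by
    simp only [A']; fun_prop
  have hB : Continuous fun p : (ℝ × ℝ) × ℝ => B' p.1.1 p.1.2 p.2 := by
    simp only [B']; fun_prop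
  have hC : Continuous fun p : (ℝ × ℝ) × ℝ => C' p.1.1 p.1.2 p.2 := by
    simp only [C']; fun_prop
  have iA : ∫ p, A' p.1.1 p.1.2 p.2 ∂(boxM a b T) = 0 := by
    refine box_dx (P := fun x y t =>
      G y * (F1 x * pdx (pdx u) x y t - F2 x * pdx u x y t + F3 x * u x y t
        + (F1 x * (u x y t * u x y t)) / 2) + G1 y * (F x * v x y t)) ha ?_ hA ?_
    · intro x y t
      exact ((((((hF1 x).mul (du3 x y t)).sub ((hF2 x).mul (du2 x y t))).add
        ((hF3 x).mul (du1 x y t))).add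
        (((hF1 x).mul ((du1 x y t).mul (du1 x y t))).div_const 2)).const_mul (G y)).add
        (((hF x).mul (dvx x y t)).const_mul (G1 y))
    · intro y t
      simp [zF.1, zF.2, zF1.1, zF1.2, zF2.1, zF2.2, zF3.1, zF3.2]
  have iB : ∫ p, B' p.1.1 p.1.2 p.2 ∂(boxM a b T) = 0 := by
    refine box_dy (P := fun x y t =>
      F1 x * (G y * v x y t) + F x * (G1 y * u x y t)) hb ?_ hB ?_
    · intro x y t
      exact (((hG y).mul (dvy x y t)).const_mul (F1 x)).add
        (((hG1 y).mul (duy x y t)).const_mul (F x))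
    · intro x t
      simp [zG.1, zG.2, zG1.1, zG1.2]
  have iC : ∫ p, C' p.1.1 p.1.2 p.2 ∂(boxM a b T) = 0 := by
    refine box_dt (P := fun x y t => (F1 x * G y) * u x y t) hT ?_ hC ?_
    · intro x y t
      exact (dut x y t).const_mul (F1 x * G y)
    · intro x y
      simp [hper]
  have key : ∫ p, ((u p.1.1 p.1.2 p.2) ^ 2 * (F2 p.1.1 * G p.1.2) -
      2 * (u p.1.1 p.1.2 p.2 * (F p.1.1 * G2 p.1.2 - F4 p.1.1 * G p.1.2))) ∂(boxM a b T)
      = ∫ p, 2 * ((A' p.1.1 p.1.2 p.2 - B' p.1.1 p.1.2 p.2) + C' p.1.1 p.1.2 p.2)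
        ∂(boxM a b T) := by
    rw [boxM, ← Measure.restrict_univ (μ := rectM a b), Measure.prod_restrict]
    refine setIntegral_congr_fun (MeasurableSet.univ.prod measurableSet_Ioc) ?_
    rintro ⟨⟨x, y⟩, t⟩ ⟨-, ht⟩
    have e1 := hsol.compat x y t ht.1.le
    have e2 := hsol.kp x y t ht.1.le
    simp only [A', B', C', e1]
    linear_combination (-2 * F1 x * G y) * e2
  have zero : ∫ p, ((A' p.1.1 p.1.2 p.2 - B' p.1.1 p.1.2 p.2) + C' p.1.1 p.1.2 p.2)
      ∂(boxM a b T) = 0 := by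
    have h1 := integral_add (box_integrable a b T (hA.sub hB)) (box_integrable a b T hC)
    have h2 := integral_sub (box_integrable a b T hA) (box_integrable a b T hB)
    exact h1.trans (by rw [iC, add_zero]; exact h2.trans (by rw [iA, iB, sub_zero]))
  rw [← sub_eq_zero, ← integral_sub (box_integrable _ _ _ (by fun_prop))
    (box_integrable _ _ _ (by fun_prop)), key, integral_const_mul, zero, mul_zero]

/-! ### The scaled weights -/

/-- The base weight in `x`. It vanishes to order four at `±1`, and its second derivative
at `0` is `1`. -/
def f0 (x : ℝ) : ℝ := -(1 - x ^ 2) ^ 4 / 8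
/-- First derivative of `f0`. -/
def f1 (x : ℝ) : ℝ := x * (1 - x ^ 2) ^ 3
/-- Second derivative of `f0`. -/
def f2 (x : ℝ) : ℝ := (1 - x ^ 2) ^ 3 - 6 * x ^ 2 * (1 - x ^ 2) ^ 2
/-- Third derivative of `f0`. -/
def f3 (x : ℝ) : ℝ := -18 * x * (1 - x ^ 2) ^ 2 + 24 * x ^ 3 * (1 - x ^ 2)
/-- Fourth derivative of `f0`. -/
def f4 (x : ℝ) : ℝ := -18 * (1 - x ^ 2) ^ 2 + 144 * x ^ 2 * (1 - x ^ 2) - 48 * x ^ 4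
/-- The base weight in `y`. It vanishes to order two at `±1`, and equals `1` at `0`. -/
def g0 (y : ℝ) : ℝ := (1 - y ^ 2) ^ 2
/-- First derivative of `g0`. -/
def g1 (y : ℝ) : ℝ := -4 * y * (1 - y ^ 2)
/-- Second derivative of `g0`. -/
def g2 (y : ℝ) : ℝ := -4 + 12 * y ^ 2

lemma hasDerivAt_w (x : ℝ) : HasDerivAt (fun x : ℝ => 1 - x ^ 2) (-(2 * x)) x := by
  simpa using ((hasDerivAt_pow 2 x).const_sub 1)

lemma hf0 (x : ℝ) : HasDerivAt f0 (f1 x) x := by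
  refine ((((hasDerivAt_w x).pow 4).neg).div_const 8).congr_deriv ?_
  simp only [f1]; push_cast; ring

lemma hf1 (x : ℝ) : HasDerivAt f1 (f2 x) x := by
  refine ((hasDerivAt_id x).mul ((hasDerivAt_w x).pow 3)).congr_deriv ?_
  simp only [f2, id]; push_cast; simp; ring

lemma hf2 (x : ℝ) : HasDerivAt f2 (f3 x) x := by
  refine (((hasDerivAt_w x).pow 3).sub
    (((hasDerivAt_pow 2 x).const_mul 6).mul ((hasDerivAt_w x).pow 2))).congr_deriv ?_
  simp only [f3]; push_cast; simp; ring

lemma hf3 (x : ℝ) : HasDerivAt f3 (f4 x) x := by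
  refine ((((hasDerivAt_id x).const_mul (-18)).mul ((hasDerivAt_w x).pow 2)).add
    (((hasDerivAt_pow 3 x).const_mul 24).mul (hasDerivAt_w x))).congr_deriv ?_
  simp only [f4, id]; push_cast; simp; ring

lemma hg0 (x : ℝ) : HasDerivAt g0 (g1 x) x := by
  refine ((hasDerivAt_w x).pow 2).congr_deriv ?_
  simp only [g1]; push_cast; simp; ring

lemma hg1 (x : ℝ) : HasDerivAt g1 (g2 x) x := by
  refine (((hasDerivAt_id x).const_mul (-4)).mul (hasDerivAt_w x)).congr_deriv ?_
  simp only [g2, id]; ring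

lemma scale_deriv {h h' : ℝ → ℝ} (hh : ∀ x, HasDerivAt h (h' x) x) (a c c' : ℝ)
    (hc : c' = c / a) (x : ℝ) :
    HasDerivAt (fun x => c * h (x / a)) (c' * h' (x / a)) x := by
  refine (((hh (x / a)).comp x ((hasDerivAt_id x).div_const a)).const_mul c).congr_deriv ?_
  rw [hc]; ring

lemma weight_bounds {x : ℝ} (hx : |x| ≤ 1) :
    |f0 x| ≤ 1 ∧ |f2 x| ≤ 7 ∧ |f4 x| ≤ 210 ∧ |g0 x| ≤ 1 ∧ |g2 x| ≤ 16 := by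
  have h0 : 0 ≤ x ^ 2 := sq_nonneg x
  have h1 : x ^ 2 ≤ 1 := by rw [← sq_abs]; exact pow_le_one₀ (abs_nonneg x) hx
  have e4 : x ^ 4 = (x ^ 2) ^ 2 := by ring
  simp only [f0, f2, f4, g0, g2, e4]
  generalize x ^ 2 = z at *
  obtain ⟨w, rfl⟩ : ∃ w, z = 1 - w := ⟨1 - z, by ring⟩
  have w0 : 0 ≤ w := by linarith
  have w1 : w ≤ 1 := by linarith
  have p2 : w ^ 2 ≤ 1 := pow_le_one₀ w0 w1
  have p3 : w ^ 3 ≤ 1 := pow_le_one₀ w0 w1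
  have p4 : w ^ 4 ≤ 1 := pow_le_one₀ w0 w1
  have q2 : 0 ≤ w ^ 2 := by positivity
  have q3 : 0 ≤ w ^ 3 := by positivity
  have q4 : 0 ≤ w ^ 4 := by positivity
  have e : 1 - (1 - w) = w := by ring
  rw [e]
  refine ⟨abs_le.2 ⟨by linarith, by linarith⟩, abs_le.2 ⟨by nlinarith, by nlinarith⟩,
    abs_le.2 ⟨by nlinarith, by nlinarith⟩, abs_le.2 ⟨by linarith, by linarith⟩,
    abs_le.2 ⟨by linarith, by linarith⟩⟩

/-! ### Mass bounds -/

lemma schwartz_sq_integrable {w : ℝ → ℝ → ℝ} (hw : IsSchwartzSlice w) :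
    Integrable (fun p : ℝ × ℝ => (w p.1 p.2) ^ 2) := by
  obtain ⟨g, hg⟩ := hw
  have h := (g.memLp 2 (volume : Measure (ℝ × ℝ))).integrable_sq
  refine h.congr (ae_of_all _ fun p => ?_)
  simp only [← hg]

/-- Tightness around a locally bounded trajectory bounds the mass on `[0, T]`: outside a disc
it is at most `1`, and the discs with centres at times in `[0, T]` lie in one square, on which
`u` is bounded. -/
lemma mass_bounded {u v : ℝ → ℝ → ℝ → ℝ} (hsol : KPSol (-1) 0 u v) {T D R : ℝ}
    (hR : 0 < R) (xc yc : ℝ → ℝ)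
    (hx : ∀ t, 0 ≤ t → t ≤ T → |xc t| ≤ D) (hy : ∀ t, 0 ≤ t → t ≤ T → |yc t| ≤ D)
    (hc : ∀ t : ℝ, 0 ≤ t →
      (∫ p in {p : ℝ × ℝ | R ^ 2 ≤ (p.1 - xc t) ^ 2 + (p.2 - yc t) ^ 2},
        (u p.1 p.2 t) ^ 2) < 1) :
    ∃ M, ∀ t, 0 ≤ t → t ≤ T → ∫ p : ℝ × ℝ, (u p.1 p.2 t) ^ 2 ≤ M := by
  set L := R + D
  obtain ⟨K, hK⟩ := ((isCompact_Icc (a := -L) (b := L)).prod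
    (isCompact_Icc (a := -L) (b := L))).prod (isCompact_Icc (a := (0 : ℝ)) (b := T))
    |>.exists_bound_of_continuousOn (cont_reorder hsol.smooth_u).continuousOn
  refine ⟨1 + K ^ 2 * volume.real (Set.Icc (-L) L ×ˢ Set.Icc (-L) L : Set (ℝ × ℝ)),
    fun t ht htT => ?_⟩
  have hi := schwartz_sq_integrable (hsol.schwartz_u t ht)
  set S := {p : ℝ × ℝ | R ^ 2 ≤ (p.1 - xc t) ^ 2 + (p.2 - yc t) ^ 2}
  have hS : MeasurableSet S := by
    apply measurableSet_le <;> fun_prop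
  rw [← integral_add_compl hS hi]
  refine add_le_add (hc t ht).le ?_
  have hsub : Sᶜ ⊆ Set.Icc (-L) L ×ˢ Set.Icc (-L) L := by
    rintro ⟨x, y⟩ hp
    simp only [S, Set.mem_compl_iff, Set.mem_ofPred_eq, not_le] at hp
    have h1 : |x - xc t| ≤ R := abs_le_of_sq_le_sq (by nlinarith [sq_nonneg (y - yc t)]) hR.le
    have h2 : |y - yc t| ≤ R := abs_le_of_sq_le_sq (by nlinarith [sq_nonneg (x - xc t)]) hR.le
    have h3 := hx t ht htT
    have h4 := hy t ht htT
    rw [abs_le] at h1 h2 h3 h4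
    simp only [L, Set.mem_prod, Set.mem_Icc]
    refine ⟨⟨?_, ?_⟩, ?_, ?_⟩ <;> linarith
  have hfin : volume (Set.Icc (-L) L ×ˢ Set.Icc (-L) L : Set (ℝ × ℝ)) < ⊤ :=
    (isCompact_Icc.prod isCompact_Icc).measure_lt_top
  refine (setIntegral_mono_set hi.integrableOn (ae_of_all _ fun p => sq_nonneg _)
    hsub.eventuallyLE).trans ?_
  refine (Real.le_norm_self _).trans (norm_setIntegral_le_of_norm_le_const hfin fun p hp => ?_)
  rw [norm_pow]
  exact pow_le_pow_left₀ (norm_nonneg _) (hK (p, t) ⟨hp, ht, htT⟩) 2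

lemma slab_integrable {u v : ℝ → ℝ → ℝ → ℝ} (hsol : KPSol (-1) 0 u v) {T M : ℝ}
    (hM : ∀ t, 0 ≤ t → t ≤ T → ∫ p : ℝ × ℝ, (u p.1 p.2 t) ^ 2 ≤ M) :
    Integrable (fun p : (ℝ × ℝ) × ℝ => (u p.1.1 p.1.2 p.2) ^ 2) (slabM T) := by
  have hm : AEStronglyMeasurable (fun p : (ℝ × ℝ) × ℝ => (u p.1.1 p.1.2 p.2) ^ 2)
      (slabM T) := ((cont_reorder hsol.smooth_u).pow 2).aestronglyMeasurable
  have hmem : ∀ᵐ t ∂(volume.restrict (Set.Ioc 0 T)), t ∈ Set.Ioc 0 T :=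
    ae_restrict_mem measurableSet_Ioc
  rw [slabM] at hm ⊢
  refine (integrable_prod_iff' hm).2 ⟨?_, ?_⟩
  · filter_upwards [hmem] with t ht
    exact schwartz_sq_integrable (hsol.schwartz_u t ht.1.le)
  · refine (integrable_const M).mono' hm.norm.prod_swap.integral_prod_right' ?_
    filter_upwards [hmem] with t ht
    rw [Real.norm_of_nonneg (integral_nonneg fun _ => norm_nonneg _)]
    simp only [norm_pow, Real.norm_eq_abs, sq_abs]
    exact hM t ht.1.le ht.2

/-! ### The weighted mass as the box grows -/

lemma boxM_univ {s T : ℝ} (hT : 0 ≤ T) :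
    (boxM (s ^ 2) (s ^ 4) T).real Set.univ = 4 * s ^ 6 * T := by
  rw [boxM, rectM, ← Set.univ_prod_univ, measureReal_prod_prod, ← Set.univ_prod_univ,
    measureReal_prod_prod]
  simp only [measureReal_restrict_apply_univ, Real.volume_real_Ioc]
  simp only [sub_neg_eq_add, sub_zero]
  rw [max_eq_left (by positivity), max_eq_left (by positivity), max_eq_left (by positivity)]
  ring

/-- The weighted mass identity in the box `|x| ≤ s²`, `|y| ≤ s⁴`. There the linear terms carry
a factor `O(s⁻⁴)`, so by the arithmetic-geometric mean inequality they are at most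
`u²/s + O(s⁻⁷)`, and the box has volume `O(s⁶)`. -/
lemma weighted_mass_le {u v : ℝ → ℝ → ℝ → ℝ} (hsol : KPSol (-1) 0 u v) {T s : ℝ}
    (hT : 0 ≤ T) (hs : 0 < s) (hper : ∀ x y, u x y T = u x y 0)
    (hi : Integrable (fun p : (ℝ × ℝ) × ℝ => (u p.1.1 p.1.2 p.2) ^ 2) (slabM T)) :
    ∫ p, (u p.1.1 p.1.2 p.2) ^ 2 * (f2 (p.1.1 / s ^ 2) * g0 (p.1.2 / s ^ 4))
      ∂(boxM (s ^ 2) (s ^ 4) T) ≤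
    (∫ p, (u p.1.1 p.1.2 p.2) ^ 2 ∂(slabM T) + 226 ^ 2 * 4 * T) * s⁻¹ := by
  have hs0 : s ≠ 0 := hs.ne'
  have d2 : s ^ 2 / s ^ 2 = 1 := div_self (by positivity)
  have d4 : s ^ 4 / s ^ 4 = 1 := div_self (by positivity)
  have id := box_identity hsol hT (a := s ^ 2) (b := s ^ 4) (by positivity) (by positivity) hper
    (F := fun x => s ^ 4 * f0 (x / s ^ 2)) (F1 := fun x => s ^ 2 * f1 (x / s ^ 2))
    (F2 := fun x => 1 * f2 (x / s ^ 2)) (F3 := fun x => (s ^ 2)⁻¹ * f3 (x / s ^ 2))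
    (F4 := fun x => (s ^ 4)⁻¹ * f4 (x / s ^ 2))
    (G := fun x => 1 * g0 (x / s ^ 4)) (G1 := fun x => (s ^ 4)⁻¹ * g1 (x / s ^ 4))
    (G2 := fun x => (s ^ 8)⁻¹ * g2 (x / s ^ 4))
    (scale_deriv hf0 _ _ _ (by field_simp)) (scale_deriv hf1 _ _ _ (by field_simp))
    (scale_deriv hf2 _ _ _ (by field_simp)) (scale_deriv hf3 _ _ _ (by field_simp))
    (by unfold f4; fun_prop)
    (scale_deriv hg0 _ _ _ (by field_simp)) (scale_deriv hg1 _ _ _ (by field_simp))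
    (by unfold g2; fun_prop)
    (by simp [neg_div, d2, f0]) (by simp [neg_div, d2, f1]) (by simp [neg_div, d2, f2])
    (by simp [neg_div, d2, f3]) (by simp [neg_div, d4, g0]) (by simp [neg_div, d4, g1])
  simp only [one_mul] at id
  rw [id]
  have hib : Integrable (fun p : (ℝ × ℝ) × ℝ => (u p.1.1 p.1.2 p.2) ^ 2)
      (boxM (s ^ 2) (s ^ 4) T) := by
    rw [boxM_eq]; exact hi.restrict
  have step : ∫ p, 2 * (u p.1.1 p.1.2 p.2 *
      (s ^ 4 * f0 (p.1.1 / s ^ 2) * ((s ^ 8)⁻¹ * g2 (p.1.2 / s ^ 4)) -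
        (s ^ 4)⁻¹ * f4 (p.1.1 / s ^ 2) * g0 (p.1.2 / s ^ 4))) ∂(boxM (s ^ 2) (s ^ 4) T) ≤
      ∫ p, ((u p.1.1 p.1.2 p.2) ^ 2 * s⁻¹ + 226 ^ 2 * (s ^ 7)⁻¹)
        ∂(boxM (s ^ 2) (s ^ 4) T) := by
    have cu := hsol.smooth_u.continuous
    refine integral_mono_ae (box_integrable _ _ _ (by unfold f0 g2 f4 g0; fun_prop))
      ((hib.mul_const _).add (integrable_const _)) ?_
    have hmem : ∀ᵐ p ∂(boxM (s ^ 2) (s ^ 4) T),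
        p ∈ (Set.Ioc (-s ^ 2) (s ^ 2) ×ˢ Set.Ioc (-s ^ 4) (s ^ 4)) ×ˢ (Set.univ : Set ℝ) := by
      rw [boxM_eq]
      exact ae_restrict_mem
        ((measurableSet_Ioc.prod measurableSet_Ioc).prod MeasurableSet.univ)
    filter_upwards [hmem] with p hp
    obtain ⟨⟨hpx, hpy⟩, -⟩ := hp
    have bx : |p.1.1 / s ^ 2| ≤ 1 := by
      rw [abs_div, abs_of_pos (by positivity : 0 < s ^ 2), div_le_one (by positivity)]
      exact abs_le.2 ⟨hpx.1.le, hpx.2⟩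
    have bz : |p.1.2 / s ^ 4| ≤ 1 := by
      rw [abs_div, abs_of_pos (by positivity : 0 < s ^ 4), div_le_one (by positivity)]
      exact abs_le.2 ⟨hpy.1.le, hpy.2⟩
    obtain ⟨b0, -, b4, -, -⟩ := weight_bounds bx
    obtain ⟨-, -, -, c0, c2⟩ := weight_bounds bz
    -- what remains is an inequality between real numbers
    generalize u p.1.1 p.1.2 p.2 = U
    generalize f0 (p.1.1 / s ^ 2) = φ0 at *
    generalize f4 (p.1.1 / s ^ 2) = φ4 at *
    generalize g0 (p.1.2 / s ^ 4) = γ0 at *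
    generalize g2 (p.1.2 / s ^ 4) = γ2 at *
    have hW : |φ0 * γ2 - φ4 * γ0| ≤ 226 := by
      calc |φ0 * γ2 - φ4 * γ0| ≤ |φ0| * |γ2| + |φ4| * |γ0| := by
            rw [← abs_mul, ← abs_mul]; exact abs_sub _ _
        _ ≤ 1 * 16 + 210 * 1 := by gcongr
        _ = 226 := by norm_num
    have hW2 : (φ0 * γ2 - φ4 * γ0) ^ 2 ≤ 226 ^ 2 := by
      rw [← sq_abs]; exact pow_le_pow_left₀ (abs_nonneg _) hW 2
    have e : 2 * (U * (s ^ 4 * φ0 * ((s ^ 8)⁻¹ * γ2) - (s ^ 4)⁻¹ * φ4 * γ0)) =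
        2 * U * ((φ0 * γ2 - φ4 * γ0) * (s ^ 3)⁻¹) * s⁻¹ := by
      field_simp
    have e' : U ^ 2 * s⁻¹ + 226 ^ 2 * (s ^ 7)⁻¹ =
        (U ^ 2 + 226 ^ 2 * ((s ^ 3)⁻¹) ^ 2) * s⁻¹ := by
      field_simp
    rw [e, e']
    gcongr
    have h1 := mul_le_mul_of_nonneg_right hW2 (sq_nonneg ((s ^ 3)⁻¹))
    nlinarith [sq_nonneg (U - (φ0 * γ2 - φ4 * γ0) * (s ^ 3)⁻¹)]
  refine step.trans ?_
  rw [integral_add (hib.mul_const _) (integrable_const _), integral_mul_const, integral_const,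
    boxM_univ hT, add_mul, smul_eq_mul]
  refine add_le_add ?_ (le_of_eq (by field_simp))
  refine mul_le_mul_of_nonneg_right ?_ (by positivity)
  rw [boxM_eq]
  exact setIntegral_le_integral hi (ae_of_all _ fun p => sq_nonneg _)

/-- The weight `f2 (x / s²) g0 (y / s⁴)` is bounded on the box and tends pointwise to
`f2 0 * g0 0 = 1`, so the weighted mass converges by dominated convergence. -/
lemma weighted_mass_tendsto {u : ℝ → ℝ → ℝ → ℝ} {T : ℝ}
    (hi : Integrable (fun p : (ℝ × ℝ) × ℝ => (u p.1.1 p.1.2 p.2) ^ 2) (slabM T)) :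
    Tendsto (fun s : ℝ =>
      ∫ p, (u p.1.1 p.1.2 p.2) ^ 2 * (f2 (p.1.1 / s ^ 2) * g0 (p.1.2 / s ^ 4))
        ∂(boxM (s ^ 2) (s ^ 4) T)) atTop
      (nhds (∫ p, (u p.1.1 p.1.2 p.2) ^ 2 ∂(slabM T))) := by
  have cf : Continuous f2 := by unfold f2; fun_prop
  have cg : Continuous g0 := by unfold g0; fun_prop
  have hms : ∀ s : ℝ, MeasurableSet
      ((Set.Ioc (-s ^ 2) (s ^ 2) ×ˢ Set.Ioc (-s ^ 4) (s ^ 4)) ×ˢ (Set.univ : Set ℝ)) :=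
    fun s => (measurableSet_Ioc.prod measurableSet_Ioc).prod MeasurableSet.univ
  simp only [boxM_eq, ← integral_indicator (hms _)]
  refine tendsto_integral_filter_of_dominated_convergence
    (fun p => 7 * (u p.1.1 p.1.2 p.2) ^ 2) ?_ ?_ (hi.const_mul 7) ?_
  · refine Eventually.of_forall fun s => ?_
    refine AEStronglyMeasurable.indicator (hi.aestronglyMeasurable.mul ?_) (hms s)
    exact Continuous.aestronglyMeasurable (by fun_prop)
  · filter_upwards [eventually_gt_atTop 0] with s hs
    refine ae_of_all _ fun p => ?_
    by_cases hp : p ∈ (Set.Ioc (-s ^ 2) (s ^ 2) ×ˢ Set.Ioc (-s ^ 4) (s ^ 4)) ×ˢ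
      (Set.univ : Set ℝ)
    · rw [Set.indicator_of_mem hp]
      obtain ⟨⟨hpx, hpy⟩, -⟩ := hp
      have bx : |p.1.1 / s ^ 2| ≤ 1 := by
        rw [abs_div, abs_of_pos (by positivity : 0 < s ^ 2), div_le_one (by positivity)]
        exact abs_le.2 ⟨hpx.1.le, hpx.2⟩
      have bz : |p.1.2 / s ^ 4| ≤ 1 := by
        rw [abs_div, abs_of_pos (by positivity : 0 < s ^ 4), div_le_one (by positivity)]
        exact abs_le.2 ⟨hpy.1.le, hpy.2⟩
      rw [norm_mul, norm_mul, Real.norm_of_nonneg (sq_nonneg _), mul_comm]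
      refine mul_le_mul_of_nonneg_right ?_ (sq_nonneg _)
      calc ‖f2 (p.1.1 / s ^ 2)‖ * ‖g0 (p.1.2 / s ^ 4)‖ ≤ 7 * 1 :=
            mul_le_mul (weight_bounds bx).2.1 (weight_bounds bz).2.2.2.1 (norm_nonneg _)
              (by norm_num)
        _ = 7 := by norm_num
    · rw [Set.indicator_of_notMem hp, norm_zero]; positivity
  · refine ae_of_all _ fun p => ?_
    have t2 : Tendsto (fun s : ℝ => s ^ 2) atTop atTop := tendsto_pow_atTop (by norm_num)
    have t4 : Tendsto (fun s : ℝ => s ^ 4) atTop atTop := tendsto_pow_atTop (by norm_num)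
    have lim : Tendsto (fun s : ℝ => (u p.1.1 p.1.2 p.2) ^ 2 *
        (f2 (p.1.1 / s ^ 2) * g0 (p.1.2 / s ^ 4))) atTop
        (nhds ((u p.1.1 p.1.2 p.2) ^ 2 * (f2 0 * g0 0))) :=
      ((cf.tendsto 0).comp (tendsto_const_nhds.div_atTop t2)).mul
        ((cg.tendsto 0).comp (tendsto_const_nhds.div_atTop t4)) |>.const_mul _
    have e : f2 0 * g0 0 = 1 := by norm_num [f2, g0]
    rw [e, mul_one] at lim
    refine lim.congr' ?_
    filter_upwards [t2.eventually_gt_atTop |p.1.1|, t4.eventually_gt_atTop |p.1.2|]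
      with s h2 h4
    rw [abs_lt] at h2 h4
    rw [Set.indicator_of_mem]
    exact ⟨⟨⟨h2.1, h2.2.le⟩, h4.1, h4.2.le⟩, Set.mem_univ _⟩

/-- Nonexistence of time-periodic compact KP-I solutions with algebraically
bounded trajectory (`|x(t)| ≤ C₀ t^{m₁}`, `|y(t)| ≤ C₀ t^{m₂}`, `m₁, m₂ < 1`). -/
theorem kpI_no_periodic_compact_solution (u v : ℝ → ℝ → ℝ → ℝ)
    (hsol : KPSol (-1) 0 u v)
    (T : ℝ) (hT : 0 < T)
    (hper : ∀ x y t : ℝ, 0 ≤ t → u x y (t + T) = u x y t)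
    (C₀ m₁ m₂ : ℝ) (hC₀ : 0 < C₀)
    (hm₁ : 0 ≤ m₁) (hm₁' : m₁ < 1) (hm₂ : 0 ≤ m₂) (hm₂' : m₂ < 1)
    (xc yc : ℝ → ℝ)
    (hxc : ∀ t : ℝ, 0 ≤ t → |xc t| ≤ C₀ * t ^ m₁)
    (hyc : ∀ t : ℝ, 0 ≤ t → |yc t| ≤ C₀ * t ^ m₂)
    (hcompact : ∀ ε : ℝ, 0 < ε → ∃ R > (0 : ℝ), ∀ t : ℝ, 0 ≤ t →
      (∫ p in {p : ℝ × ℝ | R ^ 2 ≤ (p.1 - xc t) ^ 2 + (p.2 - yc t) ^ 2},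
        (u p.1 p.2 t) ^ 2) < ε) :
    ∀ x y t : ℝ, 0 ≤ t → u x y t = 0 := by
  obtain ⟨R, hR, hcR⟩ := hcompact 1 one_pos
  have hp1 : ∀ m t : ℝ, 0 ≤ m → 0 ≤ t → t ≤ T → C₀ * t ^ m ≤ C₀ * T ^ m :=
    fun m t hm ht htT => mul_le_mul_of_nonneg_left (Real.rpow_le_rpow ht htT hm) hC₀.le
  obtain ⟨M, hM⟩ := mass_bounded hsol (T := T) (D := max (C₀ * T ^ m₁) (C₀ * T ^ m₂)) hR xc yc
    (fun t ht htT => ((hxc t ht).trans (hp1 _ _ hm₁ ht htT)).trans (le_max_left _ _))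
    (fun t ht htT => ((hyc t ht).trans (hp1 _ _ hm₂ ht htT)).trans (le_max_right _ _)) hcR
  have hi := slab_integrable hsol hM
  have hper0 : ∀ x y, u x y T = u x y 0 := fun x y => by simpa using hper x y 0 le_rfl
  have hle : ∫ p, (u p.1.1 p.1.2 p.2) ^ 2 ∂(slabM T) ≤ 0 := by
    have lim : Tendsto (fun s : ℝ =>
        (∫ p, (u p.1.1 p.1.2 p.2) ^ 2 ∂(slabM T) + 226 ^ 2 * 4 * T) * s⁻¹) atTop (nhds 0) := by
      have := tendsto_inv_atTop_zero.const_mul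
        (∫ p, (u p.1.1 p.1.2 p.2) ^ 2 ∂(slabM T) + 226 ^ 2 * 4 * T)
      rwa [mul_zero] at this
    refine le_of_tendsto_of_tendsto (weighted_mass_tendsto hi) lim ?_
    filter_upwards [eventually_gt_atTop 0] with s hs
    exact weighted_mass_le hsol hT.le hs hper0 hi
  have h0 := hle.antisymm (integral_nonneg fun p => sq_nonneg _)
  have hae := (integral_eq_zero_iff_of_nonneg (fun p => sq_nonneg _) hi).1 h0
  have cu := cont_reorder hsol.smooth_u
  -- a continuous function vanishing almost everywhere on an open set vanishes on it
  have hopen : Set.EqOn (fun p : (ℝ × ℝ) × ℝ => (u p.1.1 p.1.2 p.2) ^ 2) 0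
      (Set.univ ×ˢ Set.Ioo 0 T) := by
    refine Measure.eqOn_open_of_ae_eq (μ := (volume : Measure ((ℝ × ℝ) × ℝ))) ?_
      (isOpen_univ.prod isOpen_Ioo) (cu.pow 2).continuousOn continuousOn_const
    rw [slabM, ← Measure.restrict_univ (μ := (volume : Measure (ℝ × ℝ))),
      Measure.prod_restrict] at hae
    exact ae_restrict_of_ae_restrict_of_subset
      (Set.prod_mono subset_rfl Set.Ioo_subset_Ioc_self) hae
  have hIcc : ∀ x y t, t ∈ Set.Icc 0 T → u x y t = 0 := by
    intro x y t ht
    have h1 : Set.EqOn (fun t => u x y t) (fun _ => 0) (Set.Ioo 0 T) := fun t ht => by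
      simpa using hopen (x := ((x, y), t)) ⟨Set.mem_univ _, ht⟩
    have h2 := h1.closure
      (cu.comp (f := fun t : ℝ => ((x, y), t)) (by fun_prop)) continuous_const
    rw [closure_Ioo hT.ne] at h2
    exact h2 ht
  have hpern : ∀ (n : ℕ) x y t, 0 ≤ t → u x y (t + n * T) = u x y t := by
    intro n
    induction n with
    | zero => intro x y t _; simp
    | succ k ih =>
      intro x y t ht
      rw [← ih x y t ht, ← hper x y (t + k * T) (by positivity)]
      congr 1; push_cast; ring
  intro x y t ht
  have hn := Nat.floor_le (div_nonneg ht hT.le)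
  have hn' := Nat.lt_floor_add_one (t / T)
  rw [le_div_iff₀ hT] at hn
  rw [div_lt_iff₀ hT] at hn'
  have h := hpern ⌊t / T⌋₊ x y (t - ⌊t / T⌋₊ * T) (by linarith)
  rw [sub_add_cancel] at h
  rw [h]
  exact hIcc _ _ _ ⟨by linarith, by linarith⟩
end
end

section
/- Let φ, ψ be the fixed weights. Then for all a, b > 0 and x₀ ∈ ℝ, the improper integral x ↦ ∫_{−∞}^{x} ψ((s−x₀)/a) φ((s−x₀)/b) ds is well defined for every x ∈ ℝ, and it satisfies the bound |∫_{−∞}^{x} ψ((s−x₀)/a) φ((s−x₀)/b) ds| ≤ 9 b φ((x−x₀)/b) for all x ∈ ℝ. -/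
/-!
Since `φ(s) ≤ 3 e^{-|s|}`, integrating gives `|ψ| ≤ 3`, so the integrand `G` satisfies
`|G(s)| ≤ 9 e^{-|s-x₀|/b}`. For `x ≤ x₀` the integral of this majorant over `(-∞, x]` is
`9 b e^{(x-x₀)/b} ≤ 9 b φ((x-x₀)/b)` by the lower bound on `φ`. As `φ` is even and `ψ` is odd, `G` is
odd about `x₀`, so for `x ≥ x₀` the integral over `[2x₀-x, x]` vanishes and the integral up to `x`
equals the one up to the reflected point `2x₀-x ≤ x₀`.
-/

open MeasureTheory Filter Real

noncomputable section

lemma KPWeight.le_exp_neg_abs {φ : ℝ → ℝ} (hφ : KPWeight φ) (x : ℝ) :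
    φ x ≤ 3 * Real.exp (-|x|) := by
  rcases abs_cases x with ⟨h, h0⟩ | ⟨h, h0⟩
  · rw [h]; exact hφ.upper x h0
  · rw [h, ← hφ.even x]; exact hφ.upper (-x) (by linarith)

lemma KPWeight.exp_neg_abs_le {φ : ℝ → ℝ} (hφ : KPWeight φ) (x : ℝ) :
    Real.exp (-|x|) ≤ φ x := by
  rcases abs_cases x with ⟨h, h0⟩ | ⟨h, h0⟩
  · rw [h]; exact hφ.lower x h0
  · rw [h, ← hφ.even x]; exact hφ.lower (-x) (by linarith)

lemma KPWeight.integral_neg {φ : ℝ → ℝ} (hφ : KPWeight φ) (x : ℝ) :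
    (∫ s in (0 : ℝ)..(-x), φ s) = -∫ s in (0 : ℝ)..x, φ s := by
  have h := intervalIntegral.integral_comp_neg (a := 0) (b := x) φ
  simp only [hφ.even, neg_zero] at h
  rw [h, intervalIntegral.integral_symm]

lemma KPWeight.abs_integral_le_of_nonneg {φ : ℝ → ℝ} (hφ : KPWeight φ) {x : ℝ} (hx : 0 ≤ x) :
    |∫ s in (0 : ℝ)..x, φ s| ≤ 3 := by
  have hc : Continuous φ := hφ.smooth.continuous
  rw [abs_of_nonneg (intervalIntegral.integral_nonneg hx fun s _ => (hφ.pos s).le)]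
  have hexp : ∫ s in (0 : ℝ)..x, Real.exp (-s) = 1 - Real.exp (-x) := by
    rw [intervalIntegral.integral_comp_neg (fun s => Real.exp s)]
    simp
  calc (∫ s in (0 : ℝ)..x, φ s) ≤ ∫ s in (0 : ℝ)..x, 3 * Real.exp (-s) :=
        intervalIntegral.integral_mono_on hx (hc.intervalIntegrable _ _)
          (Continuous.intervalIntegrable (by fun_prop) _ _) fun s hs => hφ.upper s hs.1
    _ = 3 * (1 - Real.exp (-x)) := by rw [intervalIntegral.integral_const_mul, hexp]
    _ ≤ 3 := by linarith [Real.exp_pos (-x)]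

lemma KPWeight.abs_integral_le {φ : ℝ → ℝ} (hφ : KPWeight φ) (x : ℝ) :
    |∫ s in (0 : ℝ)..x, φ s| ≤ 3 := by
  rcases le_total 0 x with hx | hx
  · exact hφ.abs_integral_le_of_nonneg hx
  · have h := hφ.abs_integral_le_of_nonneg (neg_nonneg.mpr hx)
    rwa [hφ.integral_neg, abs_neg] at h

/-- A continuous function that is odd about `x₀` and decays exponentially away from `x₀` has an
antiderivative vanishing at `-∞` with the same decay in both directions: oddness makes the total
integral zero, which is what gives the decay at `+∞`. -/
lemma abs_setIntegral_Iic_le_of_odd {G : ℝ → ℝ} {b x₀ C : ℝ} (hb : 0 < b) (hG : Continuous G)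
    (hodd : ∀ s, G (2 * x₀ - s) = -G s) (hdec : ∀ s, |G s| ≤ C * Real.exp (-|(s - x₀) / b|))
    (x : ℝ) :
    IntegrableOn G (Set.Iic x) ∧
      |∫ s in Set.Iic x, G s| ≤ C * b * Real.exp (-|(x - x₀) / b|) := by
  have hb' : 0 < b⁻¹ := inv_pos.mpr hb
  -- On the left of `x₀` the majorant is a pure exponential, with an explicit primitive.
  have hleft : ∀ y ≤ x₀, IntegrableOn G (Set.Iic y) ∧
      |∫ s in Set.Iic y, G s| ≤ C * b * Real.exp (-|(y - x₀) / b|) := by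
    intro y hy
    have habs : ∀ s ≤ x₀,
        Real.exp (-|(s - x₀) / b|) = Real.exp (-x₀ / b) * Real.exp (b⁻¹ * s) := by
      intro s hs
      rw [abs_of_nonpos (div_nonpos_of_nonpos_of_nonneg (by linarith) hb.le), ← Real.exp_add]
      congr 1
      field_simp
      ring
    have hint : IntegrableOn (fun s => C * Real.exp (-x₀ / b) * Real.exp (b⁻¹ * s))
        (Set.Iic y) := (integrableOn_exp_mul_Iic hb' y).const_mul _
    have hle : ∀ᵐ s ∂volume.restrict (Set.Iic y),
        ‖G s‖ ≤ C * Real.exp (-x₀ / b) * Real.exp (b⁻¹ * s) := by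
      filter_upwards [ae_restrict_mem measurableSet_Iic] with s hs
      rw [mul_assoc, ← habs s (le_trans hs hy)]
      exact hdec s
    refine ⟨hint.mono' hG.aestronglyMeasurable hle, ?_⟩
    refine (norm_integral_le_of_norm_le hint hle).trans_eq ?_
    rw [integral_const_mul, integral_exp_mul_Iic hb', habs y hy]
    field_simp
  have hint : ∀ y, IntegrableOn G (Set.Iic y) := by
    intro y
    refine ((hleft x₀ le_rfl).1.union
      (hG.integrableOn_Icc (a := x₀) (b := y))).mono_set fun s hs => ?_
    rcases le_total s x₀ with h | h
    · exact Or.inl h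
    · exact Or.inr ⟨h, hs⟩
  refine ⟨hint x, ?_⟩
  rcases le_total x x₀ with hx | hx
  · exact (hleft x hx).2
  · have hzero : ∫ s in (2 * x₀ - x)..x, G s = 0 := by
      have h := intervalIntegral.integral_comp_sub_left (a := 2 * x₀ - x) (b := x) G (2 * x₀)
      simp only [hodd, intervalIntegral.integral_neg, sub_sub_cancel] at h
      linarith
    have hsub := intervalIntegral.integral_Iic_sub_Iic (hint (2 * x₀ - x)) (hint x)
    rw [hzero, sub_eq_zero] at hsub
    have h := (hleft (2 * x₀ - x) (by linarith)).2
    rwa [← hsub, show (2 * x₀ - x - x₀) / b = -((x - x₀) / b) by ring, abs_neg] at h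

/-- The antiderivative `∂ₓ⁻¹(ψ((·−x₀)/a) φ((·−x₀)/b))` is well defined
(the integrand is integrable on every `(−∞,x]`) and satisfies the pointwise bound
`|∫_{−∞}^x ψ((s−x₀)/a) φ((s−x₀)/b) ds| ≤ 9b φ((x−x₀)/b)`. -/
theorem kp_weight_antiderivative_bound (φ : ℝ → ℝ) (hφ : KPWeight φ)
    (ψ : ℝ → ℝ) (hψ : ∀ x, ψ x = ∫ s in (0 : ℝ)..x, φ s)
    (a b x₀ : ℝ) (ha : 0 < a) (hb : 0 < b) :
    ∀ x : ℝ,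
      IntegrableOn (fun s : ℝ => ψ ((s - x₀) / a) * φ ((s - x₀) / b)) (Set.Iic x) ∧
      |∫ s in Set.Iic x, ψ ((s - x₀) / a) * φ ((s - x₀) / b)| ≤ 9 * b * φ ((x - x₀) / b) := by
  intro x
  have hc : Continuous φ := hφ.smooth.continuous
  have hψc : Continuous ψ := by
    rw [funext hψ]
    exact intervalIntegral.continuous_primitive (fun _ _ => hc.intervalIntegrable _ _) 0
  obtain ⟨hi, hbd⟩ := abs_setIntegral_Iic_le_of_odd (x₀ := x₀) (C := 9)
    (G := fun s : ℝ => ψ ((s - x₀) / a) * φ ((s - x₀) / b)) hb (by fun_prop)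
    (fun s => by
      have h1 : (2 * x₀ - s - x₀) / a = -((s - x₀) / a) := by ring
      have h2 : (2 * x₀ - s - x₀) / b = -((s - x₀) / b) := by ring
      simp only [h1, h2, hφ.even, hψ, hφ.integral_neg, neg_mul])
    (fun s => by
      rw [abs_mul, abs_of_pos (hφ.pos _)]
      calc _ ≤ 3 * (3 * Real.exp (-|(s - x₀) / b|)) :=
            mul_le_mul (hψ ((s - x₀) / a) ▸ hφ.abs_integral_le _) (hφ.le_exp_neg_abs _)
              (hφ.pos _).le (by norm_num)
        _ = _ := by ring) x
  exact ⟨hi, hbd.trans (mul_le_mul_of_nonneg_left (hφ.exp_neg_abs_le _) (by positivity))⟩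
end
end

section
/- For every p with 2 ≤ p ≤ 6 there exists a constant c > 0 such that for all Schwartz functions f, g : ℝ² → ℝ satisfying ∂_x g = ∂_y f (so g plays the role of ∂_x^{−1}∂_y f), one has ‖f‖_{L^p(ℝ²)} ≤ c ‖f‖_{L²(ℝ²)}^{(6−p)/(2p)} ‖∂_x f‖_{L²(ℝ²)}^{(p−2)/p} ‖g‖_{L²(ℝ²)}^{(p−2)/(2p)}. -/
/-!
The case `p = 6` carries the content; the others follow from it by Hölder interpolation with the
trivial case `p = 2` (`integral_abs_rpow_le`).

For `p = 6`, the relation `∂ₓg = ∂_y f` gives `∂_y ∫ f² dx = 2 ∫ f ∂ₓg dx = -2 ∫ ∂ₓf g dx`, so the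
energy of `f` on every horizontal line is at most `2 ‖∂ₓf‖₂ ‖g‖₂` (`integral_slice_sq_le` and the
Cauchy–Schwarz inequality). On such a line the one-dimensional bound `sup f⁴ ≤ 4 ∫ f² dx ∫ (∂ₓf)² dx`
(`pow_four_le`) yields `∫ f⁶ dx ≤ 4 (∫ f² dx)² ∫ (∂ₓf)² dx`. Bounding the squared factor uniformly
in `y` and integrating in `y` gives `‖f‖₆⁶ ≤ 16 ‖∂ₓf‖₂⁴ ‖g‖₂²` (`integral_pow_six_le`).
-/

open MeasureTheory Filter Real

noncomputable section

open scoped LineDeriv SchwartzMap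

lemma hasTemperateGrowth_mk_left (y : ℝ) :
    Function.HasTemperateGrowth (fun x : ℝ => (x, y)) := by
  have h : (fun x : ℝ => (x, y)) = fun x => ContinuousLinearMap.inl ℝ ℝ ℝ x + (0, y) := by
    ext x <;> simp
  rw [h]
  fun_prop

lemma hasTemperateGrowth_mk_right (x : ℝ) :
    Function.HasTemperateGrowth (fun y : ℝ => (x, y)) := by
  have h : (fun y : ℝ => (x, y)) = fun y => ContinuousLinearMap.inr ℝ ℝ ℝ y + (x, 0) := by
    ext y <;> simp
  rw [h]
  fun_prop

/-- The restriction `x ↦ f (x, y)` of a Schwartz function to a horizontal line. -/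
def hslice (f : 𝓢(ℝ × ℝ, ℝ)) (y : ℝ) : 𝓢(ℝ, ℝ) :=
  SchwartzMap.compCLMOfAntilipschitz (K := 1) (g := fun x : ℝ => (x, y)) ℝ (hasTemperateGrowth_mk_left y)
    (AntilipschitzWith.of_le_mul_dist fun a b => by simp [Prod.dist_eq]) f

/-- The restriction `y ↦ f (x, y)` of a Schwartz function to a vertical line. -/
def vslice (f : 𝓢(ℝ × ℝ, ℝ)) (x : ℝ) : 𝓢(ℝ, ℝ) :=
  SchwartzMap.compCLMOfAntilipschitz (K := 1) (g := fun y : ℝ => (x, y)) ℝ (hasTemperateGrowth_mk_right x)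
    (AntilipschitzWith.of_le_mul_dist fun a b => by simp [Prod.dist_eq]) f

lemma coe_hslice (f : 𝓢(ℝ × ℝ, ℝ)) (y : ℝ) : ⇑(hslice f y) = fun x => f (x, y) := rfl

lemma coe_vslice (f : 𝓢(ℝ × ℝ, ℝ)) (x : ℝ) : ⇑(vslice f x) = fun y => f (x, y) := rfl

lemma deriv_fst_eq (f : 𝓢(ℝ × ℝ, ℝ)) (x y : ℝ) :
    deriv (fun x' => f (x', y)) x = (∂_{((1 : ℝ), (0 : ℝ))} f) (x, y) := by
  rw [SchwartzMap.lineDerivOp_apply_eq_fderiv]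
  have h1 : HasDerivAt (fun x' : ℝ => (x', y)) ((1 : ℝ), (0 : ℝ)) x :=
    (hasDerivAt_id x).prodMk (hasDerivAt_const x y)
  exact (f.differentiableAt.hasFDerivAt.comp_hasDerivAt x h1).deriv

lemma deriv_snd_eq (f : 𝓢(ℝ × ℝ, ℝ)) (x y : ℝ) :
    deriv (fun y' => f (x, y')) y = (∂_{((0 : ℝ), (1 : ℝ))} f) (x, y) := by
  rw [SchwartzMap.lineDerivOp_apply_eq_fderiv]
  have h1 : HasDerivAt (fun y' : ℝ => (x, y')) ((0 : ℝ), (1 : ℝ)) y :=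
    (hasDerivAt_const y x).prodMk (hasDerivAt_id y)
  exact (f.differentiableAt.hasFDerivAt.comp_hasDerivAt y h1).deriv

lemma integrable_schwartz_mul {E : Type*} [NormedAddCommGroup E] [NormedSpace ℝ E]
    [MeasurableSpace E] [BorelSpace E] [SecondCountableTopology E] {μ : Measure E}
    [μ.HasTemperateGrowth] (u v : 𝓢(E, ℝ)) : Integrable (fun z => u z * v z) μ :=
  (u.memLp 2 μ).integrable_mul (v.memLp 2 μ)

lemma integrable_schwartz_pow {E : Type*} [NormedAddCommGroup E] [NormedSpace ℝ E]
    [MeasurableSpace E] [BorelSpace E] [SecondCountableTopology E] {μ : Measure E}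
    [μ.HasTemperateGrowth] (u : 𝓢(E, ℝ)) {n : ℕ} (hn : Even n) (hn0 : n ≠ 0) :
    Integrable (fun z => u z ^ n) μ := by
  simpa [hn.pow_abs] using (u.memLp n μ).integrable_norm_pow hn0

lemma sq_integral_abs_mul_le {E : Type*} [NormedAddCommGroup E] [NormedSpace ℝ E]
    [MeasurableSpace E] [BorelSpace E] [SecondCountableTopology E] {μ : Measure E}
    [μ.HasTemperateGrowth] (u v : 𝓢(E, ℝ)) :
    (∫ z, |u z * v z| ∂μ) ^ 2 ≤ (∫ z, u z ^ 2 ∂μ) * ∫ z, v z ^ 2 ∂μ := by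
  have h := integral_mul_norm_le_Lp_mul_Lq (μ := μ) (f := u) (g := v) (p := 2) (q := 2)
    Real.HolderConjugate.two_two (by simpa using u.memLp 2 μ) (by simpa using v.memLp 2 μ)
  simp only [Real.norm_eq_abs, ← abs_mul, Real.rpow_two, sq_abs, ← Real.sqrt_eq_rpow] at h
  have h0 : 0 ≤ ∫ z, |u z * v z| ∂μ := integral_nonneg fun _ => abs_nonneg _
  have hu : 0 ≤ ∫ z, u z ^ 2 ∂μ := integral_nonneg fun _ => sq_nonneg _
  have hv : 0 ≤ ∫ z, v z ^ 2 ∂μ := integral_nonneg fun _ => sq_nonneg _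
  exact (pow_le_pow_left₀ h0 h 2).trans_eq (by rw [mul_pow, Real.sq_sqrt hu, Real.sq_sqrt hv])

lemma sq_eq_integral_Iic (u : 𝓢(ℝ, ℝ)) (a : ℝ) :
    u a ^ 2 = ∫ t in Set.Iic a, 2 * (u t * deriv u t) := by
  have hint : Integrable (fun t => 2 * (u t * deriv u t)) :=
    (integrable_schwartz_mul u (SchwartzMap.derivCLM ℝ ℝ u)).const_mul 2
  have hlim : Tendsto (fun t => u t ^ 2) atBot (nhds 0) := by
    simpa using (u.tendsto_cocompact.mono_left atBot_le_cocompact).pow 2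
  rw [integral_Iic_of_hasDerivAt_of_tendsto' (f := fun t => u t ^ 2) ?_ hint.integrableOn hlim,
    sub_zero]
  intro t _
  convert! u.differentiableAt.hasDerivAt.pow 2 using 1
  push_cast; ring

/-- The one-dimensional Agmon inequality `sup u⁴ ≤ 4 ‖u‖₂² ‖u'‖₂²`. -/
lemma pow_four_le (u : 𝓢(ℝ, ℝ)) (a : ℝ) :
    u a ^ 4 ≤ 4 * ((∫ t, u t ^ 2) * ∫ t, deriv u t ^ 2) := by
  have hint : Integrable (fun t => |u t * deriv u t|) :=
    (integrable_schwartz_mul u (SchwartzMap.derivCLM ℝ ℝ u)).abs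
  have h1 : u a ^ 2 ≤ 2 * ∫ t, |u t * deriv u t| := by
    rw [sq_eq_integral_Iic, integral_const_mul]
    gcongr
    calc _ ≤ ∫ t in Set.Iic a, |u t * deriv u t| := (le_abs_self _).trans abs_integral_le_integral_abs
      _ ≤ _ := setIntegral_le_integral hint (ae_of_all _ fun _ => abs_nonneg _)
  have h2 := sq_integral_abs_mul_le (μ := volume) u (SchwartzMap.derivCLM ℝ ℝ u)
  simp only [SchwartzMap.derivCLM_apply] at h2
  calc u a ^ 4 = (u a ^ 2) ^ 2 := by ring
    _ ≤ (2 * ∫ t, |u t * deriv u t|) ^ 2 := by gcongr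
    _ = 4 * (∫ t, |u t * deriv u t|) ^ 2 := by ring
    _ ≤ _ := by gcongr

/-- The energy on a horizontal line grows at rate `∂_y ∫ f² dx = 2 ∫ f ∂ₓg dx = -2 ∫ ∂ₓf g dx`, so
it is controlled by the integral of `|∂ₓf g|` over the whole plane. -/
lemma integral_slice_sq_le (f g : 𝓢(ℝ × ℝ, ℝ))
    (hfg : ∀ x y : ℝ, deriv (fun x' => g (x', y)) x = deriv (fun y' => f (x, y')) y) (b : ℝ) :
    ∫ x, f (x, b) ^ 2 ≤ 2 * ∫ q, |(∂_{((1 : ℝ), (0 : ℝ))} f) q * g q| := by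
  set fx := ∂_{((1 : ℝ), (0 : ℝ))} f with hfx
  set fy := ∂_{((0 : ℝ), (1 : ℝ))} f with hfy
  have hI : Integrable (fun q => 2 * (f q * fy q))
      ((volume : Measure ℝ).prod (volume.restrict (Set.Iic b))) := by
    have : Integrable (fun q => 2 * (f q * fy q)) ((volume : Measure ℝ).prod volume) :=
      (integrable_schwartz_mul f fy (μ := volume)).const_mul 2
    have h2 := this.restrict (s := Set.univ ×ˢ Set.Iic b)
    rwa [← Measure.prod_restrict, Measure.restrict_univ] at h2
  have hJ : Integrable (fun q => |fx q * g q|) ((volume : Measure ℝ).prod volume) :=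
    (integrable_schwartz_mul fx g (μ := volume)).abs
  have hJ' : Integrable (fun y => ∫ x, |fx (x, y) * g (x, y)|) := hJ.integral_prod_right
  have hrow : ∀ y, ∫ x, 2 * (f (x, y) * fy (x, y)) ≤ 2 * ∫ x, |fx (x, y) * g (x, y)| := by
    intro y
    rw [integral_const_mul]
    have h := SchwartzMap.integral_mul_deriv_eq_neg_deriv_mul (hslice f y) (hslice g y)
    simp only [coe_hslice, hfg, deriv_fst_eq f, deriv_snd_eq f] at h
    rw [h]
    gcongr
    exact (neg_le_abs _).trans abs_integral_le_integral_abs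
  calc ∫ x, f (x, b) ^ 2 = ∫ x, ∫ y in Set.Iic b, 2 * (f (x, y) * fy (x, y)) := by
        congr 1 with x
        have h := sq_eq_integral_Iic (vslice f x) b
        simpa only [coe_vslice, deriv_snd_eq] using h
    _ = ∫ y in Set.Iic b, ∫ x, 2 * (f (x, y) * fy (x, y)) :=
        integral_integral_swap (f := fun x y => 2 * (f (x, y) * fy (x, y))) hI
    _ ≤ ∫ y in Set.Iic b, 2 * ∫ x, |fx (x, y) * g (x, y)| :=
        integral_mono hI.integral_prod_right (hJ'.const_mul 2).integrableOn hrow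
    _ ≤ ∫ y, 2 * ∫ x, |fx (x, y) * g (x, y)| :=
        setIntegral_le_integral (hJ'.const_mul 2) (ae_of_all _ fun y =>
          mul_nonneg zero_le_two (integral_nonneg fun _ => abs_nonneg _))
    _ = 2 * ∫ q, |fx q * g q| := by
        rw [integral_const_mul, Measure.volume_eq_prod, integral_prod_symm _ hJ]

/-- The endpoint `p = 6`: on each horizontal line `∫ f⁶ dx ≤ sup f⁴ ∫ f² dx`, where the supremum is
controlled by `pow_four_le` and the two resulting factors `∫ f² dx` by `integral_slice_sq_le`. -/
lemma integral_pow_six_le (f g : 𝓢(ℝ × ℝ, ℝ))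
    (hfg : ∀ x y : ℝ, deriv (fun x' => g (x', y)) x = deriv (fun y' => f (x, y')) y) :
    ∫ q, f q ^ 6 ≤ 16 * (∫ q, (∂_{((1 : ℝ), (0 : ℝ))} f) q ^ 2) ^ 2 * ∫ q, g q ^ 2 := by
  set fx := ∂_{((1 : ℝ), (0 : ℝ))} f with hfx
  set K := ∫ q, |fx q * g q| with hK
  set D := ∫ q, fx q ^ 2 with hD
  have hK2 : K ^ 2 ≤ D * ∫ q, g q ^ 2 := sq_integral_abs_mul_le fx g
  have hK0 : 0 ≤ K := integral_nonneg fun _ => abs_nonneg _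
  have hD0 : 0 ≤ D := integral_nonneg fun _ => sq_nonneg _
  have h6 : Integrable (fun q => f q ^ 6) ((volume : Measure ℝ).prod volume) :=
    integrable_schwartz_pow f (μ := volume) (by decide) (by decide)
  have hfx2 : Integrable (fun q => fx q ^ 2) ((volume : Measure ℝ).prod volume) :=
    integrable_schwartz_pow fx (μ := volume) (by decide) (by decide)
  have hrow : ∀ y, ∫ x, f (x, y) ^ 6 ≤ 16 * K ^ 2 * ∫ x, fx (x, y) ^ 2 := by
    intro y
    set M := ∫ x, f (x, y) ^ 2 with hM
    set E := ∫ x, fx (x, y) ^ 2 with hE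
    have hE0 : 0 ≤ E := integral_nonneg fun _ => sq_nonneg _
    have hM0 : 0 ≤ M := integral_nonneg fun _ => sq_nonneg _
    have hMK : M ≤ 2 * K := integral_slice_sq_le f g hfg y
    have hsup : ∀ x, f (x, y) ^ 4 ≤ 4 * (M * E) := fun x => by
      simpa only [coe_hslice, deriv_fst_eq] using pow_four_le (hslice f y) x
    have hi6 : Integrable (fun x => f (x, y) ^ 6) :=
      integrable_schwartz_pow (hslice f y) (by decide) (by decide)
    have hi2 : Integrable (fun x => f (x, y) ^ 2) :=
      integrable_schwartz_pow (hslice f y) (by decide) (by decide)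
    calc ∫ x, f (x, y) ^ 6 ≤ ∫ x, 4 * (M * E) * f (x, y) ^ 2 := by
          refine integral_mono hi6 (hi2.const_mul _) fun x => ?_
          calc f (x, y) ^ 6 = f (x, y) ^ 4 * f (x, y) ^ 2 := by ring
            _ ≤ _ := by gcongr; exact hsup x
      _ = 4 * M ^ 2 * E := by rw [integral_const_mul]; ring
      _ ≤ 4 * (2 * K) ^ 2 * E := by gcongr
      _ = _ := by ring
  calc ∫ q, f q ^ 6 = ∫ y, ∫ x, f (x, y) ^ 6 := by
        rw [Measure.volume_eq_prod, integral_prod_symm _ h6]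
    _ ≤ ∫ y, 16 * K ^ 2 * ∫ x, fx (x, y) ^ 2 :=
        integral_mono h6.integral_prod_right (hfx2.integral_prod_right.const_mul _) hrow
    _ = 16 * K ^ 2 * D := by
        rw [integral_const_mul, hD, Measure.volume_eq_prod, integral_prod_symm _ hfx2]
    _ ≤ 16 * (D * ∫ q, g q ^ 2) * D := by gcongr
    _ = _ := by ring

/-- Hölder interpolation of the `Lᵖ` norm between `L²` and `L⁶`, endpoints included. -/
lemma integral_abs_rpow_le (f : 𝓢(ℝ × ℝ, ℝ)) {p : ℝ} (hp2 : 2 ≤ p) (hp6 : p ≤ 6) :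
    ∫ q, |f q| ^ p ≤ (∫ q, f q ^ 2) ^ ((6 - p) / 4) * (∫ q, f q ^ 6) ^ ((p - 2) / 4) := by
  have h2 : Integrable (fun q => f q ^ 2) := integrable_schwartz_pow f (by decide) (by decide)
  have h6 : Integrable (fun q => f q ^ 6) := integrable_schwartz_pow f (by decide) (by decide)
  have n2 : ∀ q, 0 ≤ f q ^ 2 := fun q => sq_nonneg _
  have n6 : ∀ q, 0 ≤ f q ^ 6 := fun q => Even.pow_nonneg (by decide) _
  have ha : 0 ≤ (6 - p) / 4 := by linarith
  have hb : 0 ≤ (p - 2) / 4 := by linarith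
  have hsplit : ∀ q, ENNReal.ofReal (|f q| ^ p) =
      ENNReal.ofReal (f q ^ 2) ^ ((6 - p) / 4) * ENNReal.ofReal (f q ^ 6) ^ ((p - 2) / 4) := by
    intro q
    rw [ENNReal.ofReal_rpow_of_nonneg (n2 q) ha, ENNReal.ofReal_rpow_of_nonneg (n6 q) hb,
      ← ENNReal.ofReal_mul (by positivity)]
    congr 1
    rw [← Even.pow_abs (n := 2) (by decide), ← Even.pow_abs (n := 6) (by decide),
      ← Real.rpow_natCast_mul (abs_nonneg _), ← Real.rpow_natCast_mul (abs_nonneg _),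
      ← Real.rpow_add_of_nonneg (abs_nonneg _) (by positivity) (by positivity)]
    congr 1
    push_cast; ring
  have hcont : Continuous fun q => |f q| ^ p :=
    f.continuous.abs.rpow_const fun _ => Or.inr (by linarith)
  rw [integral_eq_lintegral_of_nonneg_ae (ae_of_all _ fun q => by positivity)
    hcont.aestronglyMeasurable]
  refine ENNReal.toReal_le_of_le_ofReal
    (mul_nonneg (Real.rpow_nonneg (integral_nonneg n2) _)
      (Real.rpow_nonneg (integral_nonneg n6) _)) ?_
  rw [ENNReal.ofReal_mul (Real.rpow_nonneg (integral_nonneg n2) _),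
    ← ENNReal.ofReal_rpow_of_nonneg (integral_nonneg n2) ha,
    ← ENNReal.ofReal_rpow_of_nonneg (integral_nonneg n6) hb,
    ofReal_integral_eq_lintegral_ofReal h2 (ae_of_all _ n2),
    ofReal_integral_eq_lintegral_ofReal h6 (ae_of_all _ n6)]
  simp only [hsplit]
  exact ENNReal.lintegral_mul_norm_pow_le h2.aemeasurable.ennreal_ofReal
    h6.aemeasurable.ennreal_ofReal ha hb (by ring)

/-- Anisotropic Gagliardo–Nirenberg interpolation inequality for KP:
for `2 ≤ p ≤ 6` and Schwartz `f, g` on `ℝ²` with `∂ₓ g = ∂ᵧ f` (so `g = ∂ₓ⁻¹∂ᵧ f`),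
`‖f‖_{Lᵖ} ≤ c ‖f‖_{L²}^{(6−p)/(2p)} ‖∂ₓ f‖_{L²}^{(p−2)/p} ‖g‖_{L²}^{(p−2)/(2p)}`. -/
theorem kp_interpolation_inequality (p : ℝ) (hp2 : 2 ≤ p) (hp6 : p ≤ 6) :
    ∃ c > (0 : ℝ), ∀ f g : SchwartzMap (ℝ × ℝ) ℝ,
      (∀ x y : ℝ, deriv (fun x' => g (x', y)) x = deriv (fun y' => f (x, y')) y) →
      (∫ q : ℝ × ℝ, |f q| ^ p) ^ (1 / p) ≤
        c * ((∫ q : ℝ × ℝ, (f q) ^ 2) ^ ((1 : ℝ) / 2)) ^ ((6 - p) / (2 * p))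
          * ((∫ q : ℝ × ℝ, (deriv (fun x' => f (x', q.2)) q.1) ^ 2) ^ ((1 : ℝ) / 2))
              ^ ((p - 2) / p)
          * ((∫ q : ℝ × ℝ, (g q) ^ 2) ^ ((1 : ℝ) / 2)) ^ ((p - 2) / (2 * p)) := by
  -- the constant comes from the factor `16` at `p = 6`, weighted by the interpolation exponent
  refine ⟨((16 : ℝ) ^ ((p - 2) / 4)) ^ (1 / p), by positivity, fun f g hfg => ?_⟩
  have hp : 0 < p := by linarith
  have h6 := integral_pow_six_le f g hfg
  have hp' := integral_abs_rpow_le f hp2 hp6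
  simp only [deriv_fst_eq f]
  set N := ∫ q, f q ^ 2
  set D := ∫ q, (∂_{((1 : ℝ), (0 : ℝ))} f) q ^ 2
  set G := ∫ q, g q ^ 2
  have hN : 0 ≤ N := integral_nonneg fun _ => sq_nonneg _
  have hD : 0 ≤ D := integral_nonneg fun _ => sq_nonneg _
  have hG : 0 ≤ G := integral_nonneg fun _ => sq_nonneg _
  have hS : 0 ≤ ∫ q, f q ^ 6 := integral_nonneg fun _ => Even.pow_nonneg (by decide) _
  have hP : 0 ≤ ∫ q, |f q| ^ p := integral_nonneg fun _ => by positivity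
  have hb : 0 ≤ (p - 2) / 4 := by linarith
  calc (∫ q, |f q| ^ p) ^ (1 / p)
      ≤ (N ^ ((6 - p) / 4) * (16 * D ^ 2 * G) ^ ((p - 2) / 4)) ^ (1 / p) := by
        refine Real.rpow_le_rpow hP (hp'.trans ?_) (by positivity)
        gcongr
    _ = _ := by
        rw [Real.mul_rpow (by positivity) (by positivity),
          Real.mul_rpow (x := 16 * D ^ 2) (by positivity) hG,
          Real.mul_rpow (x := 16) (by positivity) (by positivity),
          Real.mul_rpow (by positivity) (by positivity),
          Real.mul_rpow (by positivity) (by positivity),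
          ← Real.rpow_natCast_mul hD]
        simp only [← Real.rpow_mul hN, ← Real.rpow_mul hD, ← Real.rpow_mul hG]
        have e1 : (6 - p) / 4 * (1 / p) = 1 / 2 * ((6 - p) / (2 * p)) := by field_simp; ring
        have e2 : ((2 : ℕ) : ℝ) * ((p - 2) / 4) * (1 / p) = 1 / 2 * ((p - 2) / p) := by
          push_cast; field_simp; ring
        have e3 : (p - 2) / 4 * (1 / p) = 1 / 2 * ((p - 2) / (2 * p)) := by field_simp; ring
        rw [e1, e2, e3]
        ring
end
end
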